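/- arXiv:2008.00788 — 2 statements merged into one kernel-verified Lean document; each statement's English description precedes it below -/
import Mathlib

section
/- Let M ≥ 0 and let u ∈ D_M with Δu = f. Then Σ_{p ∈ V_M} (du)(p) = ∫_{Σ_N^+} f dμ. -/
open Filter Topology MeasureTheory Finset Classical

noncomputable section

/-- The one-sided full shift space `Σ_N^+` on `N` symbols; coordinates are indexed
from `0`, so the paper's `x_1 x_2 ⋯` is `x 0, x 1, ⋯` here. It carries the product
of the discrete topology on `Fin N`. -/
abbrev SSp (N : ℕ) : Type := ℕ → Fin N

/-- The level-`m` vertex set `V_m = {p : p_i = p_{i+1} for all i ≥ m+1}` (1-based),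
i.e. the sequences that are constant from (0-based) coordinate `m` on.  It is
realized as a `Finset` via the parametrization by the first `m+1` coordinates;
see `mem_V` for the defining property. -/
noncomputable def V (N m : ℕ) : Finset (SSp N) :=
  (Finset.univ : Finset (Fin (m + 1) → Fin N)).image
    (fun w j => w ⟨min j m, by omega⟩)

lemma const_from (N m : ℕ) (p : SSp N) (h : ∀ i, m ≤ i → p i = p (i + 1)) :
    ∀ j, m ≤ j → p j = p m := by
  intro j hj
  induction j with
  | zero => have : m = 0 := by omega
            simp [this]
  | succ k ih =>
      rcases Nat.lt_or_ge k m with hk | hk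
      · have : m = k + 1 := by omega
        simp [this]
      · rw [← h k hk]
        exact ih hk

/-- Membership in `V N m` is exactly the paper's condition
`p_i = p_{i+1}` for all `i ≥ m+1` (1-based), i.e. `p i = p (i+1)` for all `i ≥ m`. -/
lemma mem_V {N m : ℕ} {p : SSp N} :
    p ∈ V N m ↔ ∀ i, m ≤ i → p i = p (i + 1) := by
  classical
  constructor
  · intro hp i hi
    simp only [V, Finset.mem_image] at hp
    obtain ⟨w, -, rfl⟩ := hp
    have h1 : min i m = m := by omega
    have h2 : min (i + 1) m = m := by omega
    simp [h1, h2]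
  · intro h
    simp only [V, Finset.mem_image]
    refine ⟨fun j => p j, Finset.mem_univ _, ?_⟩
    funext j
    rcases Nat.lt_or_ge j m with hj | hj
    · have : min j m = j := by omega
      simp [this]
    · have : min j m = m := by omega
      simp only [this]
      exact (const_from N m p h j hj).symm

/-- The deleted neighbourhood `U_{p,m} = {q ∈ V_m : q ≠ p, q_i = p_i for 1 ≤ i ≤ m}`
(1-based), i.e. `q` agrees with `p` on the first `m` (0-based: `i < m`) coordinates. -/
noncomputable def U (N m : ℕ) (p : SSp N) : Finset (SSp N) :=
  (V N m).filter (fun q => q ≠ p ∧ ∀ i, i < m → q i = p i)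

/-- `κ_p = min {j : p ∈ V_j}`. -/
noncomputable def kappa (N : ℕ) (p : SSp N) : ℕ := sInf {j | p ∈ V N j}

/-- The difference operator
`H_m u (p) = Σ_{i = κ_p}^{m} Σ_{q ∈ U_{p,i}} (u(q) − u(p))`. -/
noncomputable def H (N m : ℕ) (u : SSp N → ℝ) (p : SSp N) : ℝ :=
  ∑ i ∈ Finset.Icc (kappa N p) m, ∑ q ∈ U N i p, (u q - u p)

/-- The Dirichlet form `E_{H_m}(u, v) = − Σ_{p ∈ V_m} u(p) · H_m v(p)`. -/
noncomputable def EH (N m : ℕ) (u v : SSp N → ℝ) : ℝ :=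
  -∑ p ∈ V N m, u p * H N m v p

/-- The cylinder set `[p_1 ⋯ p_m]`, determined by the first `m` coordinates of `p`. -/
def cyl (N m : ℕ) (p : SSp N) : Set (SSp N) := {x | ∀ i, i < m → x i = p i}

/-- `χ_p^m` : the indicator function of the cylinder set `[p_1 ⋯ p_{m+1}]`. -/
noncomputable def chi (N m : ℕ) (p : SSp N) : SSp N → ℝ :=
  (cyl N (m + 1) p).indicator 1

/-- `u ∈ dom E`: `u` is continuous and the energy
`E(u) = lim_m E_{H_m}(u|_{V_m})` exists (and is finite). -/
def MemDomE (N : ℕ) (u : SSp N → ℝ) : Prop :=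
  Continuous u ∧ ∃ L : ℝ, Tendsto (fun m => EH N m u u) atTop (nhds L)

/-- `v ∈ dom_M E`: `v` has finite energy and vanishes on the boundary `V_M`. -/
def MemDomME (N M : ℕ) (v : SSp N → ℝ) : Prop :=
  MemDomE N v ∧ ∀ p ∈ V N M, v p = 0

/-- `u ∈ 𝒟_M` with `Δ u = f` (strong formulation with boundary `V_M`):
`u` and `f` are continuous and
`lim_{m → ∞} max_{p ∈ V_m ∖ V_M} |N^{m+1} H_m u(p) − f(p)| = 0`. -/
def IsLaplacianOn (N M : ℕ) (u f : SSp N → ℝ) : Prop :=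
  Continuous u ∧ Continuous f ∧
    ∀ ε : ℝ, 0 < ε → ∃ m₀ : ℕ, ∀ m, m₀ ≤ m → ∀ p ∈ V N m, p ∉ V N M →
      |(N : ℝ) ^ (m + 1) * H N m u p - f p| < ε

/-- `u ∈ D_μ` with `Δ u = f` (original definition of the Laplacian):
`u` and `f` are continuous and
`lim_{m → ∞} max_{p ∈ V_m ∖ V_{m−1}} |N^{m+1} H_m u(p) − f(p)| = 0`
(the level is written `m+1` to avoid natural subtraction). -/
def IsLaplacianDmu (N : ℕ) (u f : SSp N → ℝ) : Prop :=
  Continuous u ∧ Continuous f ∧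
    ∀ ε : ℝ, 0 < ε → ∃ m₀ : ℕ, ∀ m, m₀ ≤ m → ∀ p ∈ V N (m + 1), p ∉ V N m →
      |(N : ℝ) ^ (m + 2) * H N (m + 1) u p - f p| < ε

/-- `μ` is the equidistributed Bernoulli measure:
`μ([p_1 ⋯ p_m]) = N^{−m}` for every cylinder set. -/
def IsBernoulli (N : ℕ) (μ : Measure (SSp N)) : Prop :=
  ∀ (m : ℕ) (p : SSp N), μ (cyl N m p) = (N : ENNReal)⁻¹ ^ m

/-- `ρ(x,y) = min {i : x_i ≠ y_i}` (1-based; `0`-based first disagreement plus one). -/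
noncomputable def rho (N : ℕ) (x y : SSp N) : ℕ := sInf {i | x i ≠ y i} + 1

/-- The matrix `(G_m)_{pq}`: `2/N` if `q = p`, `1/N` if `q ∈ U_{p,m}`, `0` otherwise. -/
noncomputable def Gmat (N m : ℕ) (p q : SSp N) : ℝ :=
  if q = p then 2 / N else if q ∈ U N m p then 1 / N else 0

/-- The Green's function
`g(x,y) = Σ_{m=1}^{ρ(x,y)−1} Σ_{r,s ∈ V_m ∖ V_{m−1}} (G_m)_{rs} χ_r^m(x) χ_s^m(y)`
for `ρ(x,y) > 1`, and `g(x,y) = 0` for `ρ(x,y) = 1` (the sum is then empty). -/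
noncomputable def greenFn (N : ℕ) (x y : SSp N) : ℝ :=
  ∑ m ∈ Finset.Icc 1 (rho N x y - 1),
    ∑ r ∈ (V N m).filter (fun r => r ∉ V N (m - 1)),
      ∑ s ∈ (V N m).filter (fun s => s ∉ V N (m - 1)),
        Gmat N m r s * chi N m r x * chi N m s y

/-- The Green's operator `G_μ f (x) = ∫_{Σ_N^+ ∖ {x}} g(x,y) f(y) dμ(y)`. -/
noncomputable def Gop (N : ℕ) (μ : Measure (SSp N)) (f : SSp N → ℝ) (x : SSp N) : ℝ :=
  ∫ y in ({x}ᶜ : Set (SSp N)), greenFn N x y * f y ∂μ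


lemma V_mono (N : ℕ) {i j : ℕ} (hij : i ≤ j) : V N i ⊆ V N j := fun _ hp =>
  mem_V.2 fun k hk => mem_V.1 hp k (hij.trans hk)

lemma card_V_le (N m : ℕ) : (V N m).card ≤ N ^ (m + 1) := by
  refine Finset.card_image_le.trans ?_
  simp

/-- A sequence of `V N k` lies in `V N i` exactly for `i ≥ κ_p`. -/
lemma kappa_le_iff {N k i : ℕ} {p : SSp N} (hp : p ∈ V N k) :
    kappa N p ≤ i ↔ p ∈ V N i := by
  constructor
  · intro h
    have hk : p ∈ V N (kappa N p) := Nat.sInf_mem (s := {j | p ∈ V N j}) ⟨k, hp⟩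
    exact V_mono N h hk
  · intro h
    exact Nat.sInf_le h

/-- Sequences of `V N m` that agree up to coordinate `m` are equal. -/
lemma eq_of_mem_V {N m : ℕ} {p q : SSp N} (hp : p ∈ V N m) (hq : q ∈ V N m)
    (h : ∀ i, i ≤ m → q i = p i) : q = p := by
  funext j
  rcases Nat.lt_or_ge j m with hj | hj
  · exact h j hj.le
  · rw [const_from N m p (mem_V.1 hp) j hj, const_from N m q (mem_V.1 hq) j hj]
    exact h m le_rfl

lemma mem_U {N m : ℕ} {p q : SSp N} :
    q ∈ U N m p ↔ q ∈ V N m ∧ q ≠ p ∧ ∀ i, i < m → q i = p i := by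
  simp [U]

lemma card_U_le (N m : ℕ) (p : SSp N) : (U N m p).card ≤ N := by
  have h := Finset.card_le_card_of_injOn (s := U N m p) (t := (Finset.univ : Finset (Fin N)))
    (fun q => q m) (fun _ _ => by simp) (by
      intro q hq r hr hqr
      obtain ⟨hqV, -, hq⟩ := mem_U.1 hq
      obtain ⟨hrV, -, hr⟩ := mem_U.1 hr
      refine eq_of_mem_V hrV hqV fun i hi => ?_
      rcases hi.lt_or_eq with hi | rfl
      · rw [hq i hi, hr i hi]
      · exact hqr)
  simpa using h

/-- The level-`i` differences sum to zero over `V N i`. -/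
lemma sum_V_sum_U_eq_zero (N i : ℕ) (u : SSp N → ℝ) :
    ∑ p ∈ V N i, ∑ q ∈ U N i p, (u q - u p) = 0 := by
  have key : ∑ p ∈ V N i, ∑ q ∈ U N i p, u q = ∑ p ∈ V N i, ∑ q ∈ U N i p, u p := by
    refine Finset.sum_comm' fun p q => ?_
    simp only [mem_U]
    constructor
    · rintro ⟨hp, hq, hne, h⟩
      exact ⟨⟨hp, hne.symm, fun k hk => (h k hk).symm⟩, hq⟩
    · rintro ⟨⟨hp, hne, h⟩, hq⟩
      exact ⟨hp, hq, hne.symm, fun k hk => (h k hk).symm⟩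
  simp only [Finset.sum_sub_distrib] at key ⊢
  rw [key, sub_self]

lemma H_eq_sum_filter {N k : ℕ} (m : ℕ) (u : SSp N → ℝ) {p : SSp N} (hp : p ∈ V N k) :
    H N m u p = ∑ i ∈ Finset.range (m + 1),
      if p ∈ V N i then ∑ q ∈ U N i p, (u q - u p) else 0 := by
  rw [H, ← Finset.sum_filter]
  congr 1
  ext i
  simp only [Finset.mem_Icc, Finset.mem_filter, Finset.mem_range, ← kappa_le_iff hp]
  omega

lemma sum_V_H_eq_zero (N m : ℕ) (u : SSp N → ℝ) : ∑ p ∈ V N m, H N m u p = 0 := by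
  rw [Finset.sum_congr rfl fun p hp => H_eq_sum_filter m u hp, Finset.sum_comm]
  refine Finset.sum_eq_zero fun i hi => ?_
  rw [← Finset.sum_filter, Finset.filter_mem_eq_inter,
    Finset.inter_eq_right.2 (V_mono N (by simpa [Nat.lt_succ_iff] using hi))]
  exact sum_V_sum_U_eq_zero N i u

lemma H_succ {N m : ℕ} (u : SSp N → ℝ) {p : SSp N} (hp : p ∈ V N m) :
    H N (m + 1) u p = H N m u p + ∑ q ∈ U N (m + 1) p, (u q - u p) := by
  rw [H_eq_sum_filter (m + 1) u hp, H_eq_sum_filter m u hp, Finset.sum_range_succ,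
    if_pos (V_mono N m.le_succ hp)]

lemma notMem_V_of_mem_U_succ {N m : ℕ} {p q : SSp N} (hp : p ∈ V N m)
    (hq : q ∈ U N (m + 1) p) : q ∉ V N m := by
  obtain ⟨-, hne, h⟩ := mem_U.1 hq
  exact fun hqm => hne (eq_of_mem_V hp hqm fun i hi => h i (by omega))

lemma H_eq_of_notMem {N m : ℕ} (u : SSp N → ℝ) {q : SSp N} (hq : q ∈ V N (m + 1))
    (hqm : q ∉ V N m) : H N (m + 1) u q = ∑ r ∈ U N (m + 1) q, (u r - u q) := by
  have h1 := (kappa_le_iff hq).2 hq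
  have h2 := mt (kappa_le_iff (i := m) hq).1 hqm
  have h : kappa N q = m + 1 := by omega
  rw [H, h, Finset.Icc_self, Finset.sum_singleton]

/-- The differences at a vertex balance those at its neighbours. -/
lemma sum_U_sum_U {N i : ℕ} (u : SSp N → ℝ) {p : SSp N} (hp : p ∈ V N i) :
    ∑ q ∈ U N i p, ∑ r ∈ U N i q, (u r - u q) = -∑ q ∈ U N i p, (u q - u p) := by
  set C := (V N i).filter fun q => ∀ j, j < i → q j = p j with hC
  have hpC : p ∈ C := by simp [hC, hp]
  have hU : ∀ q ∈ C, U N i q = C.erase q := by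
    intro q hq
    have hqp := (Finset.mem_filter.1 hq).2
    ext r
    simp only [mem_U, hC, Finset.mem_erase, Finset.mem_filter]
    constructor
    · rintro ⟨a, b, c⟩
      exact ⟨b, a, fun j hj => (c j hj).trans (hqp j hj)⟩
    · rintro ⟨b, a, c⟩
      exact ⟨a, b, fun j hj => (c j hj).trans (hqp j hj).symm⟩
  have hsum : ∀ q ∈ C, ∑ r ∈ U N i q, (u r - u q) = ∑ r ∈ C, (u r - u q) := by
    intro q hq
    rw [hU q hq, ← Finset.add_sum_erase C _ hq, sub_self, zero_add]
  have htot : ∑ q ∈ C, ∑ r ∈ C, (u r - u q) = 0 := by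
    simp only [Finset.sum_sub_distrib]
    rw [Finset.sum_comm, sub_self]
  rw [hsum p hpC, hU p hpC,
    Finset.sum_congr rfl fun q hq => hsum q (Finset.mem_of_mem_erase hq)]
  rw [← Finset.add_sum_erase C _ hpC] at htot
  linarith

lemma H_succ_sub {N m : ℕ} (u : SSp N → ℝ) {p : SSp N} (hp : p ∈ V N m) :
    H N (m + 1) u p - H N m u p = -∑ q ∈ U N (m + 1) p, H N (m + 1) u q := by
  rw [H_succ u hp, Finset.sum_congr rfl fun q hq =>
    H_eq_of_notMem u (mem_U.1 hq).1 (notMem_V_of_mem_U_succ hp hq),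
    sum_U_sum_U u (V_mono N m.le_succ hp)]
  ring

lemma exists_abs_le_of_continuous {N : ℕ} {f : SSp N → ℝ} (hf : Continuous f) :
    ∃ K : ℝ, 0 ≤ K ∧ ∀ x, |f x| ≤ K := by
  obtain ⟨K, hK⟩ := isCompact_univ.exists_bound_of_continuousOn hf.continuousOn
  exact ⟨max K 0, le_max_right _ _, fun x => (hK x (Set.mem_univ x)).trans (le_max_left _ _)⟩

/-- The Neumann derivative exists at every boundary vertex. -/
lemma IsLaplacianOn.exists_tendsto_H {N M : ℕ} (hN : 2 ≤ N) {u f : SSp N → ℝ}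
    (huf : IsLaplacianOn N M u f) {p : SSp N} (hp : p ∈ V N M) :
    ∃ L : ℝ, Tendsto (fun m => H N m u p) atTop (𝓝 L) := by
  obtain ⟨-, hf, hlim⟩ := huf
  obtain ⟨K, hK0, hK⟩ := exists_abs_le_of_continuous hf
  obtain ⟨m₀, hm₀⟩ := hlim 1 one_pos
  have hN0 : (0 : ℝ) < N := by positivity
  have hN1 : (1 : ℝ) < N := by exact_mod_cast hN
  set k := max m₀ M with hk
  have hstep : ∀ n, dist (H N (n + k) u p) (H N (n + 1 + k) u p)
      ≤ (K + 1) * (N : ℝ)⁻¹ ^ n := by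
    intro n
    have hpn : p ∈ V N (n + k) := V_mono N (by omega) hp
    have hq : ∀ q ∈ U N (n + k + 1) p,
        |H N (n + k + 1) u q| ≤ (K + 1) / (N : ℝ) ^ (n + k + 2) := by
      intro q hq
      have hqM : q ∉ V N M := fun h =>
        notMem_V_of_mem_U_succ hpn hq (V_mono N (by omega) h)
      have h1 := hm₀ (n + k + 1) (by omega) q (mem_U.1 hq).1 hqM
      have h2 := hK q
      rw [le_div_iff₀ (by positivity), mul_comm]
      rw [abs_lt] at h1
      rw [abs_le] at h2
      rw [← abs_of_pos (show (0 : ℝ) < (N : ℝ) ^ (n + k + 2) by positivity), ← abs_mul, abs_le]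
      constructor <;> linarith [h1.1, h1.2, h2.1, h2.2]
    rw [show n + 1 + k = n + k + 1 by omega, dist_comm, Real.dist_eq, H_succ_sub u hpn, abs_neg]
    calc |∑ q ∈ U N (n + k + 1) p, H N (n + k + 1) u q|
        ≤ ∑ q ∈ U N (n + k + 1) p, |H N (n + k + 1) u q| := Finset.abs_sum_le_sum_abs _ _
      _ ≤ (U N (n + k + 1) p).card • ((K + 1) / (N : ℝ) ^ (n + k + 2)) :=
          Finset.sum_le_card_nsmul _ _ _ hq
      _ ≤ N * ((K + 1) / (N : ℝ) ^ (n + k + 2)) := by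
          rw [nsmul_eq_mul]
          gcongr
          exact card_U_le _ _ _
      _ = (K + 1) * (N : ℝ)⁻¹ ^ (n + k + 1) := by
          rw [inv_pow]
          field_simp
          ring
      _ ≤ (K + 1) * (N : ℝ)⁻¹ ^ n := by
          gcongr ?_ * ?_
          exact pow_le_pow_of_le_one (by positivity) (inv_le_one_of_one_le₀ hN1.le) (by omega)
  have hcauchy := cauchySeq_of_le_geometric (f := fun n => H N (n + k) u p) _ _
    (inv_lt_one_of_one_lt₀ hN1) hstep
  obtain ⟨L, hL⟩ := cauchySeq_tendsto_of_complete hcauchy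
  exact ⟨L, (tendsto_add_atTop_iff_nat k).1 hL⟩

/-- The sequence that follows `x` up to coordinate `m` and is constant from there on. -/
def truncate (N m : ℕ) (x : SSp N) : SSp N := fun j => x (min j m)

lemma truncate_mem_V (N m : ℕ) (x : SSp N) : truncate N m x ∈ V N m :=
  mem_V.2 fun i hi => by simp [truncate, hi, Nat.le_succ_of_le hi]

lemma truncate_eq_iff {N m : ℕ} {x p : SSp N} (hp : p ∈ V N m) :
    truncate N m x = p ↔ x ∈ cyl N (m + 1) p := by
  constructor
  · rintro rfl i hi
    simp [truncate, Nat.lt_succ_iff.1 hi]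
  · intro h
    refine eq_of_mem_V hp (truncate_mem_V N m x) fun i hi => ?_
    simpa [truncate, hi] using h i (by omega)

lemma tendsto_truncate {N : ℕ} (x : SSp N) :
    Tendsto (fun m => truncate N m x) atTop (𝓝 x) := by
  refine tendsto_pi_nhds.2 fun j => tendsto_const_nhds.congr' ?_
  filter_upwards [eventually_ge_atTop j] with m hm
  simp [truncate, hm]

lemma measurableSet_cyl (N m : ℕ) (p : SSp N) : MeasurableSet (cyl N m p) := by
  have h : cyl N m p = ⋂ i, ⋂ (_ : i < m), (fun x : SSp N => x i) ⁻¹' {p i} := by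
    ext x
    simp [cyl]
  rw [h]
  exact MeasurableSet.iInter fun i => MeasurableSet.iInter fun _ =>
    measurable_pi_apply i (measurableSet_singleton _)

lemma comp_truncate_eq_sum {N : ℕ} (m : ℕ) (f : SSp N → ℝ) :
    (fun x => f (truncate N m x)) =
      fun x => ∑ p ∈ V N m, (cyl N (m + 1) p).indicator (fun _ => f p) x := by
  funext x
  rw [Finset.sum_eq_single_of_mem _ (truncate_mem_V N m x)]
  · rw [Set.indicator_of_mem ((truncate_eq_iff (truncate_mem_V N m x)).1 rfl)]
  · intro p hp hne
    exact Set.indicator_of_notMem (fun h => hne ((truncate_eq_iff hp).2 h).symm) _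

lemma IsBernoulli.integral_truncate {N : ℕ} {μ : Measure (SSp N)} [IsProbabilityMeasure μ]
    (hμ : IsBernoulli N μ) (m : ℕ) (f : SSp N → ℝ) :
    ∫ x, f (truncate N m x) ∂μ = ∑ p ∈ V N m, f p / (N : ℝ) ^ (m + 1) := by
  rw [comp_truncate_eq_sum, integral_finsetSum]
  · refine Finset.sum_congr rfl fun p _ => ?_
    rw [integral_indicator_const _ (measurableSet_cyl N _ p), measureReal_def, hμ]
    simp [div_eq_inv_mul]
  · exact fun p _ => (integrable_const _).indicator (measurableSet_cyl N _ p)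

lemma IsBernoulli.tendsto_average {N : ℕ} {μ : Measure (SSp N)} [IsProbabilityMeasure μ]
    (hμ : IsBernoulli N μ) {f : SSp N → ℝ} (hf : Continuous f) :
    Tendsto (fun m => ∑ p ∈ V N m, f p / (N : ℝ) ^ (m + 1)) atTop (𝓝 (∫ x, f x ∂μ)) := by
  obtain ⟨K, -, hK⟩ := exists_abs_le_of_continuous hf
  simp only [← hμ.integral_truncate]
  refine tendsto_integral_of_dominated_convergence (fun _ => K) (fun m => ?_)
    (integrable_const K) (fun m => Eventually.of_forall fun x => hK _)
    (Eventually.of_forall fun x => (hf.tendsto x).comp (tendsto_truncate x))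
  rw [comp_truncate_eq_sum]
  exact (Finset.measurable_fun_sum _ fun p _ =>
    measurable_const.indicator (measurableSet_cyl N _ p)).aestronglyMeasurable

lemma IsLaplacianOn.tendsto_sum_H {N M : ℕ} (hN : 2 ≤ N) {μ : Measure (SSp N)}
    [IsProbabilityMeasure μ] (hμ : IsBernoulli N μ) {u f : SSp N → ℝ}
    (huf : IsLaplacianOn N M u f) :
    Tendsto (fun m => ∑ p ∈ V N M, -(H N m u p)) atTop (𝓝 (∫ x, f x ∂μ)) := by
  obtain ⟨-, hf, hlim⟩ := huf
  have hN1 : (1 : ℝ) < N := by exact_mod_cast hN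
  have hboundary : Tendsto (fun m => ∑ p ∈ V N M, f p / (N : ℝ) ^ (m + 1)) atTop (𝓝 0) := by
    have h : Tendsto (fun m => (N : ℝ) ^ (m + 1)) atTop atTop :=
      (tendsto_pow_atTop_atTop_of_one_lt hN1).comp (tendsto_add_atTop_nat 1)
    simpa using tendsto_finsetSum (V N M) fun p _ => (tendsto_const_nhds (x := f p)).div_atTop h
  have hinterior : Tendsto
      (fun m => ∑ p ∈ V N m \ V N M, (H N m u p - f p / (N : ℝ) ^ (m + 1))) atTop (𝓝 0) := by
    rw [Metric.tendsto_atTop]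
    intro ε hε
    obtain ⟨m₀, hm₀⟩ := hlim (ε / 2) (half_pos hε)
    refine ⟨m₀, fun m hm => ?_⟩
    have hpow : (0 : ℝ) < (N : ℝ) ^ (m + 1) := by positivity
    rw [Real.dist_eq, sub_zero]
    have hterm : ∀ p ∈ V N m \ V N M,
        |H N m u p - f p / (N : ℝ) ^ (m + 1)| ≤ ε / 2 / (N : ℝ) ^ (m + 1) := by
      intro p hp
      obtain ⟨hpm, hpM⟩ := Finset.mem_sdiff.1 hp
      rw [le_div_iff₀ hpow, ← abs_of_pos hpow, ← abs_mul, abs_of_pos hpow, sub_mul,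
        div_mul_cancel₀ _ hpow.ne', mul_comm (H N m u p)]
      exact (hm₀ m hm p hpm hpM).le
    have hcard : ((V N m \ V N M).card : ℝ) ≤ (N : ℝ) ^ (m + 1) := by
      exact_mod_cast (Finset.card_le_card Finset.sdiff_subset).trans (card_V_le N m)
    calc |∑ p ∈ V N m \ V N M, (H N m u p - f p / (N : ℝ) ^ (m + 1))|
        ≤ ∑ p ∈ V N m \ V N M, |H N m u p - f p / (N : ℝ) ^ (m + 1)| :=
          Finset.abs_sum_le_sum_abs _ _
      _ ≤ (V N m \ V N M).card • (ε / 2 / (N : ℝ) ^ (m + 1)) :=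
          Finset.sum_le_card_nsmul _ _ _ hterm
      _ ≤ (N : ℝ) ^ (m + 1) * (ε / 2 / (N : ℝ) ^ (m + 1)) := by
          rw [nsmul_eq_mul]
          gcongr
      _ = ε / 2 := mul_div_cancel₀ _ hpow.ne'
      _ < ε := half_lt_self hε
  have hsum := (hinterior.add (hμ.tendsto_average hf)).sub hboundary
  rw [zero_add, sub_zero] at hsum
  refine hsum.congr' ?_
  filter_upwards [eventually_ge_atTop M] with m hm
  have hH := sum_V_H_eq_zero N m u
  rw [← Finset.sum_sdiff (V_mono N hm)] at hH ⊢
  rw [Finset.sum_sub_distrib, Finset.sum_neg_distrib]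
  linarith

/-- for `u ∈ 𝒟_M` with `Δu = f`,
`Σ_{p ∈ V_M} (du)(p) = ∫ f dμ`, where `(du)(p) = lim_m (−H_m u(p))`. -/
theorem statement13 (N : ℕ) (hN : 2 ≤ N)
    (μ : Measure (SSp N)) [IsProbabilityMeasure μ] (hμ : IsBernoulli N μ)
    (M : ℕ) (u f : SSp N → ℝ) (huf : IsLaplacianOn N M u f) :
    ∃ du : SSp N → ℝ,
      (∀ p ∈ V N M, Tendsto (fun m => -(H N m u p)) atTop (nhds (du p))) ∧
      ∑ p ∈ V N M, du p = ∫ x, f x ∂μ := by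
  choose! L hL using fun p (hp : p ∈ V N M) => huf.exists_tendsto_H hN hp
  refine ⟨fun p => -L p, fun p hp => (hL p hp).neg, ?_⟩
  exact tendsto_nhds_unique (tendsto_finsetSum _ fun p hp => (hL p hp).neg)
    (huf.tendsto_sum_H hN hμ)
end
end

section
/- For every continuous f : Σ_N^+ → ℝ: (i) G_μ f(p) = 0 for every p ∈ V_0; (ii) for every n ≥ 1 and p ∈ V_n ∖ V_{n−1}, H_n(G_μ f)(p) = −∫_{Σ_N^+} χ_p^n f dμ; (iii) G_μ f ∈ D_μ and Δ(G_μ f) = −f. -/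
open Filter Topology MeasureTheory Finset Classical

noncomputable section

/-- The projection of the shift space onto `V_m` that freezes a sequence from coordinate `m` on. -/
def trunc (N m : ℕ) (x : SSp N) : SSp N := fun j => x (min j m)

/-- The sequence which agrees with `p` below coordinate `n` and is constantly `a` from `n` on. -/
def splice (N n : ℕ) (p : SSp N) (a : Fin N) : SSp N := fun j => if j < n then p j else a

/-- The level-`(k+1)` contribution to the Green's function, in closed form. -/
def greenTerm (N k : ℕ) (x y : SSp N) : ℝ :=
  if (∀ i, i < k + 1 → y i = x i) ∧ x k ≠ x (k + 1) ∧ y k ≠ y (k + 1) then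
    (1 + if y (k + 1) = x (k + 1) then 1 else 0) / N
  else 0

lemma trunc_mem_V (N m : ℕ) (x : SSp N) : trunc N m x ∈ V N m := by
  rw [mem_V]
  intro i hi
  have h1 : min i m = m := by omega
  have h2 : min (i + 1) m = m := by omega
  simp [trunc, h1, h2]

lemma trunc_notMem_V_iff (N k : ℕ) (x : SSp N) :
    trunc N (k + 1) x ∉ V N k ↔ x k ≠ x (k + 1) := by
  rw [not_iff_comm, mem_V]
  constructor
  · intro h i hi
    rcases Nat.eq_or_lt_of_le hi with rfl | hi
    · simpa [trunc] using h
    · have h1 : min i (k + 1) = k + 1 := by omega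
      have h2 : min (i + 1) (k + 1) = k + 1 := by omega
      simp [trunc, h1, h2]
  · intro h
    simpa [trunc] using h k le_rfl

lemma eq_trunc_iff {N m : ℕ} {r : SSp N} (hr : r ∈ V N m) (x : SSp N) :
    x ∈ cyl N (m + 1) r ↔ r = trunc N m x := by
  constructor
  · intro h
    funext j
    rcases Nat.lt_or_ge j m with hj | hj
    · have : min j m = j := by omega
      simp only [trunc, this]
      exact (h j (by omega)).symm
    · have : min j m = m := by omega
      simp only [trunc, this]
      rw [const_from N m r (mem_V.1 hr) j hj]
      exact (h m (by omega)).symm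
  · rintro rfl i hi
    have : min i m = i := by omega
    simp [trunc, this]

lemma chi_eq_ite {N m : ℕ} {r : SSp N} (hr : r ∈ V N m) (x : SSp N) :
    chi N m r x = if r = trunc N m x then 1 else 0 := by
  by_cases h : r = trunc N m x
  · rw [if_pos h, chi, Set.indicator_of_mem ((eq_trunc_iff hr x).2 h)]
    rfl
  · rw [if_neg h, chi, Set.indicator_of_notMem (fun h' => h ((eq_trunc_iff hr x).1 h'))]

lemma chi_apply (N m : ℕ) (r x : SSp N) :
    chi N m r x = if ∀ i, i < m + 1 → x i = r i then 1 else 0 := by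
  simp [chi, cyl, Set.indicator_apply]

lemma Gmat_trunc {N k : ℕ} {x y : SSp N} (h : ∀ i, i < k + 1 → y i = x i) :
    Gmat N (k + 1) (trunc N (k + 1) x) (trunc N (k + 1) y) =
      (1 + if y (k + 1) = x (k + 1) then 1 else 0) / N := by
  have hagree : ∀ i, i < k + 1 → trunc N (k + 1) y i = trunc N (k + 1) x i := by
    intro i hi
    have : min i (k + 1) = i := by omega
    simp [trunc, this, h i hi]
  have heq : trunc N (k + 1) y = trunc N (k + 1) x ↔ y (k + 1) = x (k + 1) := by
    constructor
    · intro h'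
      simpa [trunc] using congrFun h' (k + 1)
    · intro h'
      funext j
      rcases Nat.lt_or_ge j (k + 1) with hj | hj
      · exact hagree j hj
      · simp [trunc, Nat.min_eq_right hj, h']
  unfold Gmat
  by_cases hxy : y (k + 1) = x (k + 1)
  · rw [if_pos (heq.2 hxy), if_pos hxy]
    norm_num
  · have hne : trunc N (k + 1) y ≠ trunc N (k + 1) x := fun h' => hxy (heq.1 h')
    rw [if_neg hne, if_neg hxy, if_pos, add_zero]
    exact Finset.mem_filter.2 ⟨trunc_mem_V _ _ _, hne, hagree⟩

lemma level_sum_eq_greenTerm {N k : ℕ} {x y : SSp N} (h : ∀ i, i < k + 1 → y i = x i) :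
    (∑ r ∈ (V N (k + 1)).filter (fun r => r ∉ V N k),
      ∑ s ∈ (V N (k + 1)).filter (fun s => s ∉ V N k),
        Gmat N (k + 1) r s * chi N (k + 1) r x * chi N (k + 1) s y) = greenTerm N k x y := by
  have hchi : ∀ r ∈ (V N (k + 1)).filter (fun r => r ∉ V N k), ∀ x : SSp N,
      chi N (k + 1) r x = if r = trunc N (k + 1) x then 1 else 0 :=
    fun r hr x => chi_eq_ite (Finset.mem_filter.1 hr).1 x
  have hmem : ∀ x : SSp N, trunc N (k + 1) x ∈ (V N (k + 1)).filter (fun r => r ∉ V N k) ↔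
      x k ≠ x (k + 1) := by
    intro x
    rw [Finset.mem_filter, trunc_notMem_V_iff]
    exact and_iff_right (trunc_mem_V _ _ _)
  rw [Finset.sum_congr rfl fun r hr => Finset.sum_congr rfl fun s hs => by
    rw [hchi r hr x, hchi s hs y]]
  simp only [mul_ite, mul_one, mul_zero, Finset.sum_ite_eq', hmem]
  unfold greenTerm
  by_cases hy : y k ≠ y (k + 1)
  · rw [Finset.sum_congr rfl fun r _ => if_pos hy]
    simp only [Finset.sum_ite_eq', hmem, Gmat_trunc h]
    exact if_congr ⟨fun hx => ⟨h, hx, hy⟩, fun h' => h'.2.1⟩ rfl rfl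
  · rw [Finset.sum_congr rfl fun r _ => if_neg hy, Finset.sum_const_zero,
      if_neg fun h' => hy h'.2.2]

lemma greenTerm_eq_zero {N k : ℕ} {x y : SSp N} (h : ¬ ∀ i, i < k + 1 → y i = x i) :
    greenTerm N k x y = 0 :=
  if_neg fun h' => h h'.1

lemma greenFn_eq_tsum {N : ℕ} {x y : SSp N} (hxy : y ≠ x) :
    greenFn N x y = ∑' k, greenTerm N k x y := by
  have hne : {i | x i ≠ y i}.Nonempty := by
    obtain ⟨i, hi⟩ := Function.ne_iff.1 hxy
    exact ⟨i, hi.symm⟩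
  have hd : x (rho N x y - 1) ≠ y (rho N x y - 1) := Nat.sInf_mem hne
  have hlt : ∀ i, i < rho N x y - 1 → y i = x i := by
    intro i hi
    by_contra h
    exact Nat.notMem_of_lt_sInf (m := i) (by simpa [rho] using hi) (Ne.symm h)
  rw [tsum_eq_sum (s := Finset.range (rho N x y - 1))]
  · unfold greenFn
    refine Finset.sum_nbij' (fun m => m - 1) (fun k => k + 1) ?_ ?_ ?_ ?_ ?_
    · intro m hm
      simp only [Finset.mem_Icc, Finset.mem_range] at *
      omega
    · intro m hm
      simp only [Finset.mem_Icc, Finset.mem_range] at *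
      omega
    · intro m hm
      simp only [Finset.mem_Icc] at *
      omega
    · intro m _
      simp
    · intro m hm
      obtain ⟨h1, h2⟩ := Finset.mem_Icc.1 hm
      obtain ⟨k, rfl⟩ : ∃ k, m = k + 1 := ⟨m - 1, by omega⟩
      exact level_sum_eq_greenTerm fun i hi => hlt i (by omega)
  · intro k hk
    rw [Finset.mem_range] at hk
    exact greenTerm_eq_zero fun h => hd (h _ (by omega)).symm

lemma continuous_of_finite_dependence {N : ℕ} {φ : SSp N → ℝ} (n : ℕ)
    (h : ∀ x y, (∀ i, i < n → y i = x i) → φ y = φ x) : Continuous φ := by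
  refine IsLocallyConstant.continuous ((IsLocallyConstant.iff_exists_open φ).2 fun x => ?_)
  exact ⟨_, PiNat.isOpen_cylinder (fun _ => Fin N) x n, PiNat.self_mem_cylinder x n, h x⟩

lemma greenTerm_congr_left {N k : ℕ} {x x' : SSp N} (h : ∀ i, i < k + 2 → x' i = x i)
    (y : SSp N) : greenTerm N k x' y = greenTerm N k x y := by
  have h0 : (∀ i, i < k + 1 → y i = x' i) ↔ ∀ i, i < k + 1 → y i = x i :=
    forall₂_congr fun i hi => by rw [h i (by omega)]
  simp only [greenTerm, h0, h k (by omega), h (k + 1) (by omega)]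

lemma continuous_greenTerm (N k : ℕ) (x : SSp N) : Continuous (greenTerm N k x) := by
  refine continuous_of_finite_dependence (k + 2) fun y y' h => ?_
  have h0 : (∀ i, i < k + 1 → y' i = x i) ↔ ∀ i, i < k + 1 → y i = x i :=
    forall₂_congr fun i hi => by rw [h i (by omega)]
  simp only [greenTerm, h0, h k (by omega), h (k + 1) (by omega)]

lemma abs_greenTerm_le {N : ℕ} (hN : 2 ≤ N) (k : ℕ) (x y : SSp N) :
    |greenTerm N k x y| ≤ (cyl N (k + 1) x).indicator 1 y := by
  have hN' : (2 : ℝ) ≤ N := by exact_mod_cast hN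
  by_cases h : ∀ i, i < k + 1 → y i = x i
  · rw [Set.indicator_of_mem (show y ∈ cyl N (k + 1) x from h)]
    unfold greenTerm
    split_ifs
    · rw [abs_of_nonneg (by positivity), Pi.one_apply, div_le_one (by positivity)]
      linarith
    · rw [abs_of_nonneg (by positivity), Pi.one_apply, div_le_one (by positivity)]
      linarith
    · simp
  · rw [greenTerm_eq_zero h, abs_zero]
    exact Set.indicator_nonneg (fun _ _ => zero_le_one) _

lemma IsBernoulli.real_cyl {N : ℕ} {μ : Measure (SSp N)} (hμ : IsBernoulli N μ) (m : ℕ)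
    (p : SSp N) : μ.real (cyl N m p) = (N : ℝ)⁻¹ ^ m := by
  simp [Measure.real, hμ m p]

lemma IsBernoulli.measure_singleton {N : ℕ} (hN : 2 ≤ N) {μ : Measure (SSp N)}
    (hμ : IsBernoulli N μ) (x : SSp N) : μ {x} = 0 := by
  have hlim : Tendsto (fun m : ℕ => (N : ENNReal)⁻¹ ^ m) atTop (𝓝 0) := by
    refine ENNReal.tendsto_pow_atTop_nhds_zero_of_lt_one ?_
    rw [ENNReal.inv_lt_one]
    exact_mod_cast hN
  refine le_antisymm (ge_of_tendsto' hlim fun m => ?_) bot_le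
  rw [← hμ m x]
  exact measure_mono (by rintro _ rfl i _; rfl)

lemma Continuous.integrable_SSp {N : ℕ} {μ : Measure (SSp N)} [IsProbabilityMeasure μ]
    {φ : SSp N → ℝ} (h : Continuous φ) : Integrable φ μ := by
  rw [← integrableOn_univ]
  exact h.continuousOn.integrableOn_compact isCompact_univ

lemma integrable_greenTerm_mul {N : ℕ} {μ : Measure (SSp N)} [IsProbabilityMeasure μ]
    {f : SSp N → ℝ} (hf : Continuous f) (k : ℕ) (x : SSp N) :
    Integrable (fun y => greenTerm N k x y * f y) μ :=
  ((continuous_greenTerm N k x).mul hf).integrable_SSp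

lemma integral_norm_greenTerm_mul_le {N : ℕ} (hN : 2 ≤ N) {μ : Measure (SSp N)}
    [IsProbabilityMeasure μ] (hμ : IsBernoulli N μ) {f : SSp N → ℝ} (hf : Continuous f) {C : ℝ}
    (hC : ∀ y, |f y| ≤ C) (k : ℕ) (x : SSp N) :
    ∫ y, ‖greenTerm N k x y * f y‖ ∂μ ≤ (N : ℝ)⁻¹ ^ (k + 1) * C := by
  have hint : Integrable ((cyl N (k + 1) x).indicator (1 : SSp N → ℝ)) μ :=
    (integrable_const (1 : ℝ)).indicator (measurableSet_cyl N (k + 1) x)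
  calc ∫ y, ‖greenTerm N k x y * f y‖ ∂μ
      ≤ ∫ y, (cyl N (k + 1) x).indicator 1 y * C ∂μ := by
        refine integral_mono (integrable_greenTerm_mul hf k x).norm
          (hint.mul_const C) fun y => ?_
        simp only [Real.norm_eq_abs, abs_mul]
        exact mul_le_mul (abs_greenTerm_le hN k x y) (hC y) (abs_nonneg _)
          ((abs_nonneg _).trans (abs_greenTerm_le hN k x y))
    _ = (N : ℝ)⁻¹ ^ (k + 1) * C := by
        rw [integral_mul_const, integral_indicator_one (measurableSet_cyl N (k + 1) x),
          hμ.real_cyl]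

lemma summable_geometric_bound {N : ℕ} (hN : 2 ≤ N) (C : ℝ) :
    Summable fun k : ℕ => (N : ℝ)⁻¹ ^ (k + 1) * C := by
  have hN' : (1 : ℝ) < N := by exact_mod_cast hN
  have h := summable_geometric_of_lt_one (inv_nonneg.2 (Nat.cast_nonneg N))
    (inv_lt_one_of_one_lt₀ hN')
  exact ((summable_nat_add_iff 1).2 h).mul_right C

lemma exists_abs_bound {N : ℕ} {f : SSp N → ℝ} (hf : Continuous f) : ∃ C, ∀ y, |f y| ≤ C := by
  obtain ⟨C, hC⟩ := isCompact_univ.exists_bound_of_continuousOn hf.continuousOn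
  exact ⟨C, fun y => hC y (Set.mem_univ y)⟩

lemma hasSum_Gop {N : ℕ} (hN : 2 ≤ N) {μ : Measure (SSp N)} [IsProbabilityMeasure μ]
    (hμ : IsBernoulli N μ) {f : SSp N → ℝ} (hf : Continuous f) (x : SSp N) :
    HasSum (fun k => ∫ y, greenTerm N k x y * f y ∂μ) (Gop N μ f x) := by
  obtain ⟨C, hC⟩ := exists_abs_bound hf
  have hsum : Summable fun k => ∫ y, ‖greenTerm N k x y * f y‖ ∂μ :=
    (summable_geometric_bound hN C).of_nonneg_of_le
      (fun k => integral_nonneg fun y => norm_nonneg _)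
      fun k => integral_norm_greenTerm_mul_le hN hμ hf hC k x
  have h := hasSum_integral_of_summable_integral_norm
    (fun k => integrable_greenTerm_mul hf k x) hsum
  have hne : ∀ᵐ y ∂μ, y ∈ ({x}ᶜ : Set (SSp N)) := by
    rw [ae_iff]
    simpa using hμ.measure_singleton hN x
  have heq : Gop N μ f x = ∫ y, ∑' k, greenTerm N k x y * f y ∂μ := by
    unfold Gop
    rw [Measure.restrict_eq_self_of_ae_mem hne]
    refine integral_congr_ae (hne.mono fun y hy => ?_)
    simp only [greenFn_eq_tsum (show y ≠ x from hy), tsum_mul_right]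
  exact heq ▸ h

lemma continuous_Gop {N : ℕ} (hN : 2 ≤ N) {μ : Measure (SSp N)} [IsProbabilityMeasure μ]
    (hμ : IsBernoulli N μ) {f : SSp N → ℝ} (hf : Continuous f) : Continuous (Gop N μ f) := by
  obtain ⟨C, hC⟩ := exists_abs_bound hf
  have h : Gop N μ f = fun x => ∑' k, ∫ y, greenTerm N k x y * f y ∂μ :=
    funext fun x => (hasSum_Gop hN hμ hf x).tsum_eq.symm
  rw [h]
  refine continuous_tsum (fun k => ?_) (summable_geometric_bound hN C) fun k x =>
    (norm_integral_le_integral_norm _).trans (integral_norm_greenTerm_mul_le hN hμ hf hC k x)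
  refine continuous_of_finite_dependence (k + 2) fun x x' hx => ?_
  simp only [greenTerm_congr_left hx]

lemma Gop_eq_zero {N : ℕ} (hN : 2 ≤ N) {μ : Measure (SSp N)} [IsProbabilityMeasure μ]
    (hμ : IsBernoulli N μ) {f : SSp N → ℝ} (hf : Continuous f) {p : SSp N} (hp : p ∈ V N 0) :
    Gop N μ f p = 0 := by
  have h : ∀ k y, greenTerm N k p y = 0 := fun k y =>
    if_neg fun h => h.2.1 (mem_V.1 hp k (Nat.zero_le k))
  rw [← (hasSum_Gop hN hμ hf p).tsum_eq]
  simp [h]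

lemma splice_of_lt {N n j : ℕ} (p : SSp N) (a : Fin N) (h : j < n) : splice N n p a j = p j :=
  if_pos h

lemma splice_of_le {N n j : ℕ} (p : SSp N) (a : Fin N) (h : n ≤ j) : splice N n p a j = a :=
  if_neg (by omega)

lemma splice_self {N n : ℕ} {p : SSp N} (hp : p ∈ V N n) : splice N n p (p n) = p := by
  funext j
  rcases Nat.lt_or_ge j n with hj | hj
  · exact splice_of_lt p _ hj
  · rw [splice_of_le p _ hj, const_from N n p (mem_V.1 hp) j hj]

lemma splice_mem_V (N n : ℕ) (p : SSp N) (a : Fin N) : splice N n p a ∈ V N n :=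
  mem_V.2 fun i hi => by rw [splice_of_le p a hi, splice_of_le p a (by omega)]

lemma splice_injective (N n : ℕ) (p : SSp N) : Function.Injective (splice N n p) := by
  intro a b h
  simpa [splice] using congrFun h n

lemma U_eq_image {N n : ℕ} {p : SSp N} (hp : p ∈ V N n) :
    U N n p = (Finset.univ.erase (p n)).image (splice N n p) := by
  ext q
  simp only [U, Finset.mem_filter, Finset.mem_image, Finset.mem_erase, Finset.mem_univ, and_true]
  constructor
  · rintro ⟨hq, hne, hagree⟩
    have hqs : splice N n p (q n) = q := by
      refine Eq.trans ?_ (splice_self hq)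
      funext j
      rcases Nat.lt_or_ge j n with hj | hj
      · rw [splice_of_lt _ _ hj, splice_of_lt _ _ hj, hagree j hj]
      · rw [splice_of_le _ _ hj, splice_of_le _ _ hj]
    refine ⟨q n, fun h => hne ?_, hqs⟩
    rw [← hqs, h, splice_self hp]
  · rintro ⟨a, ha, rfl⟩
    refine ⟨splice_mem_V N n p a, fun h => ha ?_, fun i hi => splice_of_lt p a hi⟩
    rw [← h, splice_of_le p a le_rfl]

lemma kappa_eq {N k : ℕ} {p : SSp N} (hp : p ∈ V N (k + 1)) (hp' : p ∉ V N k) :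
    kappa N p = k + 1 := by
  refine le_antisymm (Nat.sInf_le hp) ?_
  by_contra h
  have hmem : p ∈ V N (kappa N p) := Nat.sInf_mem (s := {j | p ∈ V N j}) ⟨_, hp⟩
  exact hp' (mem_V.2 fun i hi => mem_V.1 hmem i (by omega))

lemma H_eq_sum_splice {N k : ℕ} {p : SSp N} (hp : p ∈ V N (k + 1)) (hp' : p ∉ V N k)
    (u : SSp N → ℝ) : H N (k + 1) u p = ∑ a, (u (splice N (k + 1) p a) - u p) := by
  rw [H, kappa_eq hp hp', Finset.Icc_self, Finset.sum_singleton, U_eq_image hp,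
    Finset.sum_image (splice_injective N (k + 1) p).injOn]
  refine Finset.sum_erase _ ?_
  rw [splice_self hp, sub_self]

lemma sum_greenTerm_splice_sub {N k : ℕ} {p : SSp N} (hp : p k ≠ p (k + 1)) (y : SSp N) :
    ∑ a, (greenTerm N k (splice N (k + 1) p a) y - greenTerm N k p y) = -chi N (k + 1) p y := by
  have hN0 : (N : ℝ) ≠ 0 := by
    have := (p 0).pos
    positivity
  have hagree : ∀ a, (∀ i, i < k + 1 → y i = splice N (k + 1) p a i) ↔
      ∀ i, i < k + 1 → y i = p i :=
    fun a => forall₂_congr fun i hi => by rw [splice_of_lt p a hi]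
  simp only [chi_apply, Nat.forall_lt_succ_right (n := k + 1)]
  by_cases h : ∀ i, i < k + 1 → y i = p i
  · have hyk : y k = p k := h k (by omega)
    simp only [greenTerm, hagree, eq_true h, splice_of_lt p _ (Nat.lt_succ_self k),
      splice_of_le p _ (le_refl (k + 1)), hyk]
    by_cases hb : p k = y (k + 1)
    · have : y (k + 1) ≠ p (k + 1) := hb ▸ hp
      simp [hb, this]
    · have hsum : ∑ a, (if p k ≠ a then (1 + if y (k + 1) = a then (1 : ℝ) else 0) / N else 0)
          = 1 := by
        have hterm : ∀ a, (if p k ≠ a then (1 + if y (k + 1) = a then (1 : ℝ) else 0) / N else 0)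
            = 1 / N - (if p k = a then (1 : ℝ) / N else 0)
              + (if y (k + 1) = a then (1 : ℝ) / N else 0) := by
          intro a
          by_cases h1 : p k = a
          · subst h1
            simp [Ne.symm hb]
          · by_cases h2 : y (k + 1) = a <;> simp [h1, h2] <;> ring
        simp only [hterm, Finset.sum_add_distrib, Finset.sum_sub_distrib, Finset.sum_ite_eq,
          Finset.mem_univ, if_true, Finset.sum_const, Finset.card_univ, Fintype.card_fin,
          nsmul_eq_mul]
        field_simp
        ring
      rw [Finset.sum_sub_distrib]
      simp only [hb, hp, ne_eq, not_false_eq_true, and_true, true_and, if_true] at hsum ⊢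
      rw [hsum, Finset.sum_const, Finset.card_univ, Fintype.card_fin, nsmul_eq_mul,
        mul_div_cancel₀ _ hN0]
      ring
  · simp only [greenTerm, hagree, eq_false h, false_and, if_false, sub_self,
      Finset.sum_const_zero, neg_zero]

lemma Gop_splice_sub {N : ℕ} (hN : 2 ≤ N) {μ : Measure (SSp N)} [IsProbabilityMeasure μ]
    (hμ : IsBernoulli N μ) {f : SSp N → ℝ} (hf : Continuous f) {k : ℕ} {p : SSp N}
    (hp : p ∈ V N (k + 1)) (a : Fin N) :
    Gop N μ f (splice N (k + 1) p a) - Gop N μ f p =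
      ∫ y, (greenTerm N k (splice N (k + 1) p a) y - greenTerm N k p y) * f y ∂μ := by
  have hsub := (hasSum_Gop hN hμ hf (splice N (k + 1) p a)).sub (hasSum_Gop hN hμ hf p)
  rw [← hsub.tsum_eq, tsum_eq_single k]
  · rw [← integral_sub (integrable_greenTerm_mul hf k _) (integrable_greenTerm_mul hf k _)]
    simp only [sub_mul]
  · intro j hj
    rcases Nat.lt_or_gt_of_ne hj with hj | hj
    · have : ∀ y, greenTerm N j (splice N (k + 1) p a) y = greenTerm N j p y :=
        greenTerm_congr_left fun i hi => splice_of_lt p a (by omega)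
      simp only [this, sub_self]
    · have hzero : ∀ q ∈ V N (k + 1), ∀ y, greenTerm N j q y = 0 := fun q hq y =>
        if_neg fun h => h.2.1 (mem_V.1 hq j hj)
      simp [hzero p hp, hzero _ (splice_mem_V N (k + 1) p a)]

lemma H_Gop {N : ℕ} (hN : 2 ≤ N) {μ : Measure (SSp N)} [IsProbabilityMeasure μ]
    (hμ : IsBernoulli N μ) {f : SSp N → ℝ} (hf : Continuous f) {k : ℕ} {p : SSp N}
    (hp : p ∈ V N (k + 1)) (hp' : p ∉ V N k) :
    H N (k + 1) (Gop N μ f) p = -∫ x, chi N (k + 1) p x * f x ∂μ := by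
  have hpk : p k ≠ p (k + 1) := fun h => hp' <| mem_V.2 fun i hi => by
    rcases Nat.eq_or_lt_of_le hi with rfl | hi
    · exact h
    · exact mem_V.1 hp i hi
  have hint : ∀ a, Integrable
      (fun y => (greenTerm N k (splice N (k + 1) p a) y - greenTerm N k p y) * f y) μ :=
    fun a => (((continuous_greenTerm N k _).sub (continuous_greenTerm N k p)).mul hf).integrable_SSp
  rw [H_eq_sum_splice hp hp', Finset.sum_congr rfl fun a _ => Gop_splice_sub hN hμ hf hp a,
    ← integral_finsetSum _ fun a _ => hint a, ← integral_neg]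
  simp only [← Finset.sum_mul, sum_greenTerm_splice_sub hpk, neg_mul]

lemma exists_uniform_modulus {N : ℕ} {f : SSp N → ℝ} (hf : Continuous f) {ε : ℝ} (hε : 0 < ε) :
    ∃ n, ∀ x y : SSp N, (∀ i, i < n → y i = x i) → |f y - f x| < ε := by
  let _ : MetricSpace (SSp N) := PiNat.metricSpace
  have huc : UniformContinuous f := CompactSpace.uniformContinuous_of_continuous hf
  obtain ⟨δ, hδ, h⟩ := Metric.uniformContinuous_iff.1 huc ε hε
  obtain ⟨n, hn⟩ := exists_pow_lt_of_lt_one hδ (by norm_num : (1 / 2 : ℝ) < 1)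
  exact ⟨n, fun x y hxy => h ((PiNat.mem_cylinder_iff_dist_le.1 hxy).trans_lt hn)⟩

lemma abs_integral_chi_mul_sub_le {N : ℕ} {μ : Measure (SSp N)} [IsProbabilityMeasure μ]
    (hμ : IsBernoulli N μ) {f : SSp N → ℝ} (hf : Continuous f) {m : ℕ} {p : SSp N} {ε : ℝ}
    (h : ∀ y, (∀ i, i < m + 1 → y i = p i) → |f y - f p| ≤ ε) :
    |(N : ℝ) ^ (m + 1) * ∫ x, chi N m p x * f x ∂μ - f p| ≤ ε := by
  have hN0 : (N : ℝ) ^ (m + 1) ≠ 0 := by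
    have := (p 0).pos
    positivity
  have hchi : Continuous (chi N m p) :=
    continuous_of_finite_dependence (m + 1) fun x y hxy => by
      rw [chi_apply, chi_apply]
      exact if_congr (forall₂_congr fun i hi => by rw [hxy i hi]) rfl rfl
  have hone : ∫ x, chi N m p x ∂μ = ((N : ℝ) ^ (m + 1))⁻¹ := by
    rw [chi, integral_indicator_one (measurableSet_cyl N (m + 1) p), hμ.real_cyl, inv_pow]
  have hsub : ∫ x, chi N m p x * (f x - f p) ∂μ
      = ∫ x, chi N m p x * f x ∂μ - ((N : ℝ) ^ (m + 1))⁻¹ * f p := by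
    simp only [mul_sub]
    have h1 : Integrable (fun x => chi N m p x * f x) μ := (hchi.mul hf).integrable_SSp
    have h2 : Integrable (fun x => chi N m p x * f p) μ :=
      (hchi.mul continuous_const).integrable_SSp
    rw [integral_sub h1 h2, integral_mul_const, hone]
  have hle : |∫ x, chi N m p x * (f x - f p) ∂μ| ≤ ((N : ℝ) ^ (m + 1))⁻¹ * ε := by
    rw [← hone, ← integral_mul_const]
    refine (abs_integral_le_integral_abs).trans (integral_mono
      (hchi.mul (hf.sub continuous_const)).abs.integrable_SSp
      (hchi.mul continuous_const).integrable_SSp fun y => ?_)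
    simp only [chi_apply]
    split_ifs with hy
    · simpa using h y hy
    · simp
  have heq : (N : ℝ) ^ (m + 1) * ∫ x, chi N m p x * f x ∂μ - f p
      = (N : ℝ) ^ (m + 1) * ∫ x, chi N m p x * (f x - f p) ∂μ := by
    rw [hsub, mul_sub, mul_inv_cancel_left₀ hN0]
  rw [heq, abs_mul, abs_of_nonneg (by positivity)]
  calc (N : ℝ) ^ (m + 1) * |∫ x, chi N m p x * (f x - f p) ∂μ|
      ≤ (N : ℝ) ^ (m + 1) * (((N : ℝ) ^ (m + 1))⁻¹ * ε) := by gcongr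
    _ = ε := mul_inv_cancel_left₀ hN0 ε

/-- for every continuous `f`:
(i) `G_μ f` vanishes on `V_0`;
(ii) for `n ≥ 1` and `p ∈ V_n ∖ V_{n−1}`, `H_n (G_μ f)(p) = −∫ χ_p^n f dμ`;
(iii) `G_μ f ∈ D_μ` and `Δ(G_μ f) = −f`. -/
theorem statement15 (N : ℕ) (hN : 2 ≤ N)
    (μ : Measure (SSp N)) [IsProbabilityMeasure μ] (hμ : IsBernoulli N μ)
    (f : SSp N → ℝ) (hf : Continuous f) :
    (∀ p ∈ V N 0, Gop N μ f p = 0) ∧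
    (∀ n : ℕ, 1 ≤ n → ∀ p ∈ V N n, p ∉ V N (n - 1) →
      H N n (Gop N μ f) p = -∫ x, chi N n p x * f x ∂μ) ∧
    IsLaplacianDmu N (Gop N μ f) (fun x => -f x) := by
  refine ⟨fun p hp => Gop_eq_zero hN hμ hf hp, ?_, continuous_Gop hN hμ hf, hf.neg, ?_⟩
  · intro n hn p hp hp'
    obtain ⟨k, rfl⟩ : ∃ k, n = k + 1 := ⟨n - 1, by omega⟩
    exact H_Gop hN hμ hf hp hp'
  · intro ε hε
    obtain ⟨m₀, hm₀⟩ := exists_uniform_modulus hf (half_pos hε)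
    refine ⟨m₀, fun m hm p hp hp' => ?_⟩
    have h := abs_integral_chi_mul_sub_le hμ hf (m := m + 1) (p := p) (ε := ε / 2)
      fun y hy => (hm₀ p y fun i hi => hy i (by omega)).le
    rw [H_Gop hN hμ hf hp hp', mul_neg, ← neg_sub', abs_neg]
    exact h.trans_lt (half_lt_self hε)
end
end
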